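/- Let (X, 𝒜, μ) be a σ-finite measure space, let p_E, p_θ, p_α : X → [0,∞) be densities (measurable with ∫ p dμ = 1), let ω ∈ (0,1), λ_E > 0, λ_G ≥ 0, and set p_ω := ω·p_θ + (1−ω)·p_α. Define (with convention 0·log 0 = 0) JSD(p,q) := (1/2)·∫ p·log(p/((p+q)/2)) dμ + (1/2)·∫ q·log(q/((p+q)/2)) dμ and KL(p‖q) := ∫ p·log(p/q) dμ. Then U(p_θ, p_α) := 2·JSD(p_E, p_ω) + λ_E·KL(p_E ‖ p_α) + λ_G·KL(p_θ ‖ p_α) satisfies U(p_θ, p_α) ≥ 0, and U(p_θ, p_α) = 0 if and only if p_θ = p_α = p_E μ-almost everywhere; in particular the global equilibrium of the regularized game exists and is unique. -/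

import Mathlib

/-!
STATEMENT 10 (Theorem 1 of Triple-GAIL, divergence form with both supervised
regularizers): for densities `p_E, p_θ, p_α`, `ω ∈ (0,1)`, `λ_E > 0`,
`λ_G ≥ 0` and `p_ω = ω·p_θ + (1−ω)·p_α`, the objective
`U(p_θ, p_α) = 2·JSD(p_E, p_ω) + λ_E·KL(p_E ‖ p_α) + λ_G·KL(p_θ ‖ p_α)`
satisfies `U ≥ 0`, with equality iff `p_θ = p_α = p_E` μ-a.e.; in particular
the global equilibrium of the regularized game exists and is unique.

`KL(p‖q) = ∫ p·log(p/q) dμ` is taken in the extended reals with the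
convention `0·log 0 = 0` (so `KL = +∞` where `q = 0 < p` on a non-null set):
for densities (`∫ p dμ = ∫ q dμ = 1`) it is faithfully represented as the
lower integral of the nonnegative function `p·log(p/q) − p + q` (with value
`⊤` on `{q = 0, p ≠ 0}`), since `∫ (q − p) dμ = 0`.
-/

open MeasureTheory
open scoped ENNReal

noncomputable section

/-- Jensen–Shannon divergence between densities `p` and `q` w.r.t. `μ`. -/
def JSD {X : Type*} [MeasurableSpace X] (μ : Measure X) (p q : X → ℝ) : ℝ :=
  (1 / 2) * ∫ x, p x * Real.log (p x / ((p x + q x) / 2)) ∂μ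
    + (1 / 2) * ∫ x, q x * Real.log (q x / ((p x + q x) / 2)) ∂μ

/-- Kullback–Leibler divergence `KL(p‖q) = ∫ p·log(p/q) dμ` between densities,
valued in `[0,∞]`. -/
def KLD {X : Type*} [MeasurableSpace X] (μ : Measure X) (p q : X → ℝ) : ℝ≥0∞ :=
  ∫⁻ x, (if q x = 0 ∧ p x ≠ 0 then ⊤
    else ENNReal.ofReal (p x * Real.log (p x / q x) - p x + q x)) ∂μ

/-!
Both divergences are integrals of nonnegative functions vanishing exactly on the diagonal, because
`p log(p/q) - p + q = q · klFun(p/q)`. For the Jensen–Shannon divergence the correction terms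
`m - p` and `m - q` at the midpoint `m = (p + q) / 2` cancel.
Hence `U` is a sum of nonnegative terms and vanishes iff each of them does. The first term then
gives `p_ω = p_E`, which together with either of `p_α = p_E` and `p_θ = p_α` identifies all three
densities.
-/

open Filter InformationTheory

section Pointwise

variable {p q : ℝ}

lemma mul_log_div_sub_add_eq_mul_klFun (hq : q ≠ 0) :
    p * Real.log (p / q) - p + q = q * klFun (p / q) := by
  rw [klFun]
  field_simp
  ring

lemma mul_log_div_sub_add_nonneg (hp : 0 ≤ p) (hq : 0 ≤ q) (hpq : q = 0 → p = 0) :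
    0 ≤ p * Real.log (p / q) - p + q := by
  rcases eq_or_ne q 0 with rfl | hq'
  · simp [hpq rfl]
  · rw [mul_log_div_sub_add_eq_mul_klFun hq']
    exact mul_nonneg hq (klFun_nonneg (div_nonneg hp hq))

lemma mul_log_div_sub_add_eq_zero_iff (hp : 0 ≤ p) (hq : 0 ≤ q) :
    p * Real.log (p / q) - p + q = 0 ↔ p = q := by
  rcases eq_or_ne q 0 with rfl | hq'
  · simp
  · rw [mul_log_div_sub_add_eq_mul_klFun hq', mul_eq_zero_iff_left hq',
      klFun_eq_zero_iff (div_nonneg hp hq), div_eq_one_iff_eq hq']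

lemma abs_mul_log_div_le {C : ℝ} (hp : 0 ≤ p) (hq : 0 ≤ q) (hpq : p ≤ C * q) :
    |p * Real.log (p / q)| ≤ C * p + q := by
  rcases hp.eq_or_lt with rfl | hp
  · simpa using hq
  have hq_pos : 0 < q := hq.lt_of_ne' (by rintro rfl; linarith)
  have h_ratio : p / q ≤ C := (div_le_iff₀ hq_pos).2 hpq
  have h_lower := mul_log_div_sub_add_nonneg hp.le hq fun h ↦ absurd h hq_pos.ne'
  have h_upper : p * Real.log (p / q) ≤ p * C :=
    mul_le_mul_of_nonneg_left ((Real.log_le_self (div_pos hp hq_pos).le).trans h_ratio) hp.le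
  have hC : 0 < C := (div_pos hp hq_pos).trans_le h_ratio
  have hCp := mul_pos hC hp
  rw [abs_le]
  constructor <;> linarith

/-- The integrand of `2 * JSD`, as a function of the two values of the densities; the factor `2`
absorbs both weights `1 / 2`. -/
def jsdIntegrand (p q : ℝ) : ℝ :=
  p * Real.log (p / ((p + q) / 2)) + q * Real.log (q / ((p + q) / 2))

lemma jsdIntegrand_eq_add (p q : ℝ) :
    jsdIntegrand p q = (p * Real.log (p / ((p + q) / 2)) - p + (p + q) / 2)
      + (q * Real.log (q / ((p + q) / 2)) - q + (p + q) / 2) := by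
  rw [jsdIntegrand]
  ring

lemma mul_log_div_midpoint_left_nonneg (hp : 0 ≤ p) (hq : 0 ≤ q) :
    0 ≤ p * Real.log (p / ((p + q) / 2)) - p + (p + q) / 2 :=
  mul_log_div_sub_add_nonneg hp (by positivity) fun h ↦ by linarith

lemma mul_log_div_midpoint_right_nonneg (hp : 0 ≤ p) (hq : 0 ≤ q) :
    0 ≤ q * Real.log (q / ((p + q) / 2)) - q + (p + q) / 2 :=
  mul_log_div_sub_add_nonneg hq (by positivity) fun h ↦ by linarith

lemma jsdIntegrand_nonneg (hp : 0 ≤ p) (hq : 0 ≤ q) : 0 ≤ jsdIntegrand p q := by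
  rw [jsdIntegrand_eq_add]
  exact add_nonneg (mul_log_div_midpoint_left_nonneg hp hq)
    (mul_log_div_midpoint_right_nonneg hp hq)

lemma jsdIntegrand_eq_zero_iff (hp : 0 ≤ p) (hq : 0 ≤ q) : jsdIntegrand p q = 0 ↔ p = q := by
  have hm : 0 ≤ (p + q) / 2 := by positivity
  rw [jsdIntegrand_eq_add, add_eq_zero_iff_of_nonneg (mul_log_div_midpoint_left_nonneg hp hq)
    (mul_log_div_midpoint_right_nonneg hp hq), mul_log_div_sub_add_eq_zero_iff hp hm,
    mul_log_div_sub_add_eq_zero_iff hq hm]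
  constructor
  · rintro ⟨h, -⟩
    linarith
  · rintro rfl
    simp

/-- The integrand of `KLD`, as a function of the two values of the densities; the correction
`- p + q` makes it pointwise nonnegative. -/
def kldIntegrand (p q : ℝ) : ℝ≥0∞ :=
  if q = 0 ∧ p ≠ 0 then ⊤ else ENNReal.ofReal (p * Real.log (p / q) - p + q)

lemma kldIntegrand_eq_zero_iff (hp : 0 ≤ p) (hq : 0 ≤ q) : kldIntegrand p q = 0 ↔ p = q := by
  rw [kldIntegrand]
  split_ifs with h
  · simp [h.1, h.2]
  · have hpq : q = 0 → p = 0 := fun hq0 ↦ not_not.1 fun hp0 ↦ h ⟨hq0, hp0⟩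
    rw [ENNReal.ofReal_eq_zero, (mul_log_div_sub_add_nonneg hp hq hpq).ge_iff_eq',
      mul_log_div_sub_add_eq_zero_iff hp hq]

lemma measurable_kldIntegrand : Measurable fun z : ℝ × ℝ ↦ kldIntegrand z.1 z.2 := by
  refine Measurable.ite ?_ measurable_const (by fun_prop)
  exact (measurable_snd (measurableSet_singleton 0)).inter
    (measurable_fst (measurableSet_singleton 0)).compl

end Pointwise

section Divergence

variable {X : Type*} [MeasurableSpace X] {μ : Measure X} {p q : X → ℝ}

lemma KLD_eq_zero_iff (hpm : AEMeasurable p μ) (hp : 0 ≤ᵐ[μ] p)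
    (hqm : AEMeasurable q μ) (hq : 0 ≤ᵐ[μ] q) : KLD μ p q = 0 ↔ p =ᵐ[μ] q := by
  change ∫⁻ x, kldIntegrand (p x) (q x) ∂μ = 0 ↔ _
  have h_meas : AEMeasurable (fun x ↦ kldIntegrand (p x) (q x)) μ :=
    measurable_kldIntegrand.comp_aemeasurable (hpm.prodMk hqm)
  rw [lintegral_eq_zero_iff' h_meas]
  refine eventually_congr ?_
  filter_upwards [hp, hq] with x hpx hqx using kldIntegrand_eq_zero_iff hpx hqx

lemma integrable_mul_log_div (hpi : Integrable p μ) (hp : 0 ≤ᵐ[μ] p)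
    (hqi : Integrable q μ) (hq : 0 ≤ᵐ[μ] q) {C : ℝ} (hpq : ∀ᵐ x ∂μ, p x ≤ C * q x) :
    Integrable (fun x ↦ p x * Real.log (p x / q x)) μ := by
  have hpm := hpi.aemeasurable
  have hqm := hqi.aemeasurable
  refine ((hpi.const_mul C).add hqi).mono' (by fun_prop : AEMeasurable _ μ).aestronglyMeasurable ?_
  filter_upwards [hp, hq, hpq] with x hpx hqx hpqx using abs_mul_log_div_le hpx hqx hpqx

lemma integrable_mul_log_div_midpoint_left (hpi : Integrable p μ) (hp : 0 ≤ᵐ[μ] p)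
    (hqi : Integrable q μ) (hq : 0 ≤ᵐ[μ] q) :
    Integrable (fun x ↦ p x * Real.log (p x / ((p x + q x) / 2))) μ := by
  refine integrable_mul_log_div (C := 2) hpi hp ((hpi.add hqi).div_const 2) ?_ ?_
  all_goals
    filter_upwards [hp, hq] with x hpx hqx
    simp only [Pi.zero_apply] at *
    linarith

lemma integrable_mul_log_div_midpoint_right (hpi : Integrable p μ) (hp : 0 ≤ᵐ[μ] p)
    (hqi : Integrable q μ) (hq : 0 ≤ᵐ[μ] q) :
    Integrable (fun x ↦ q x * Real.log (q x / ((p x + q x) / 2))) μ := by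
  simpa only [add_comm] using integrable_mul_log_div_midpoint_left hqi hq hpi hp

lemma integrable_jsdIntegrand (hpi : Integrable p μ) (hp : 0 ≤ᵐ[μ] p)
    (hqi : Integrable q μ) (hq : 0 ≤ᵐ[μ] q) :
    Integrable (fun x ↦ jsdIntegrand (p x) (q x)) μ :=
  (integrable_mul_log_div_midpoint_left hpi hp hqi hq).add
    (integrable_mul_log_div_midpoint_right hpi hp hqi hq)

lemma two_mul_JSD_eq_integral (hpi : Integrable p μ) (hp : 0 ≤ᵐ[μ] p)
    (hqi : Integrable q μ) (hq : 0 ≤ᵐ[μ] q) :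
    2 * JSD μ p q = ∫ x, jsdIntegrand (p x) (q x) ∂μ := by
  simp only [jsdIntegrand]
  rw [integral_add (integrable_mul_log_div_midpoint_left hpi hp hqi hq)
    (integrable_mul_log_div_midpoint_right hpi hp hqi hq), JSD]
  ring

lemma JSD_nonneg (hpi : Integrable p μ) (hp : 0 ≤ᵐ[μ] p)
    (hqi : Integrable q μ) (hq : 0 ≤ᵐ[μ] q) : 0 ≤ JSD μ p q := by
  rw [← mul_nonneg_iff_of_pos_left two_pos, two_mul_JSD_eq_integral hpi hp hqi hq]
  refine integral_nonneg_of_ae ?_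
  filter_upwards [hp, hq] with x hpx hqx using jsdIntegrand_nonneg hpx hqx

lemma JSD_eq_zero_iff (hpi : Integrable p μ) (hp : 0 ≤ᵐ[μ] p)
    (hqi : Integrable q μ) (hq : 0 ≤ᵐ[μ] q) : JSD μ p q = 0 ↔ p =ᵐ[μ] q := by
  have h_nonneg : 0 ≤ᵐ[μ] fun x ↦ jsdIntegrand (p x) (q x) := by
    filter_upwards [hp, hq] with x hpx hqx using jsdIntegrand_nonneg hpx hqx
  rw [← mul_eq_zero_iff_left two_ne_zero, two_mul_JSD_eq_integral hpi hp hqi hq,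
    integral_eq_zero_iff_of_nonneg_ae h_nonneg (integrable_jsdIntegrand hpi hp hqi hq)]
  refine eventually_congr ?_
  filter_upwards [hp, hq] with x hpx hqx using jsdIntegrand_eq_zero_iff hpx hqx

end Divergence

section Mixture

variable {X R : Type*} [MeasurableSpace X] {μ : Measure X}

lemma mul_add_one_sub_mul_eq_right_iff [Ring R] [NoZeroDivisors R] {a b ω : R} (hω : ω ≠ 0) :
    ω * a + (1 - ω) * b = b ↔ a = b := by
  rw [← sub_eq_zero, show ω * a + (1 - ω) * b - b = ω * (a - b) by noncomm_ring,
    mul_eq_zero_iff_left hω, sub_eq_zero]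

lemma ae_eq_mixture_iff [Ring R] [NoZeroDivisors R] {p q r : X → R} {ω : R} (hω : ω ≠ 0)
    (hpr : p =ᵐ[μ] r) : p =ᵐ[μ] (fun x ↦ ω * q x + (1 - ω) * r x) ↔ q =ᵐ[μ] p := by
  refine eventually_congr (hpr.mono fun x hx ↦ ?_)
  rw [hx, eq_comm, mul_add_one_sub_mul_eq_right_iff hω]

lemma ae_eq_of_ae_eq_mixture [Ring R] {p q r : X → R} {ω : R}
    (hp : p =ᵐ[μ] fun x ↦ ω * q x + (1 - ω) * r x) (hqr : q =ᵐ[μ] r) : p =ᵐ[μ] q := by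
  filter_upwards [hp, hqr] with x hpx hqrx
  rw [hpx, ← hqrx, ← add_mul, add_sub_cancel, one_mul]

lemma ae_nonneg_mixture {p q : X → ℝ} {ω : ℝ} (hω : ω ∈ Set.Icc 0 1)
    (hp : 0 ≤ᵐ[μ] p) (hq : 0 ≤ᵐ[μ] q) : 0 ≤ᵐ[μ] fun x ↦ ω * p x + (1 - ω) * q x := by
  filter_upwards [hp, hq] with x hpx hqx
  exact add_nonneg (mul_nonneg hω.1 hpx) (mul_nonneg (sub_nonneg.2 hω.2) hqx)

end Mixture

section WeightedSum

variable {a b c : ℝ} {K L : ℝ≥0∞}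

lemma coe_mul_coe_ennreal_nonneg (ha : 0 ≤ a) : 0 ≤ (a : EReal) * (K : EReal) :=
  mul_nonneg (EReal.coe_nonneg.2 ha) (EReal.coe_ennreal_nonneg K)

lemma coe_add_mul_add_mul_nonneg (hc : 0 ≤ c) (ha : 0 ≤ a) (hb : 0 ≤ b) :
    0 ≤ (c : EReal) + (a : EReal) * (K : EReal) + (b : EReal) * (L : EReal) :=
  add_nonneg (add_nonneg (EReal.coe_nonneg.2 hc) (coe_mul_coe_ennreal_nonneg ha))
    (coe_mul_coe_ennreal_nonneg hb)

lemma coe_add_mul_add_mul_eq_zero_iff (hc : 0 ≤ c) (ha : 0 ≤ a) (hb : 0 ≤ b) :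
    (c : EReal) + (a : EReal) * (K : EReal) + (b : EReal) * (L : EReal) = 0 ↔
      (c = 0 ∧ (a = 0 ∨ K = 0)) ∧ (b = 0 ∨ L = 0) := by
  have hc' : 0 ≤ (c : EReal) := EReal.coe_nonneg.2 hc
  have haK := coe_mul_coe_ennreal_nonneg (K := K) ha
  rw [add_eq_zero_iff_of_nonneg (add_nonneg hc' haK) (coe_mul_coe_ennreal_nonneg hb),
    add_eq_zero_iff_of_nonneg hc' haK]
  simp

end WeightedSum

theorem regularized_equilibrium_RE_RG_general
    {X : Type*} [MeasurableSpace X] {μ : Measure X} {pE pθ pα : X → ℝ}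
    (hpEi : Integrable pE μ) (hpE0 : 0 ≤ᵐ[μ] pE)
    (hpθi : Integrable pθ μ) (hpθ0 : 0 ≤ᵐ[μ] pθ)
    (hpαi : Integrable pα μ) (hpα0 : 0 ≤ᵐ[μ] pα)
    {ω : ℝ} (hω : ω ∈ Set.Ioc (0 : ℝ) 1)
    {lamE : ℝ} (hlamE : 0 ≤ lamE) {lamG : ℝ} (hlamG : 0 ≤ lamG) (hlam : lamE ≠ 0 ∨ lamG ≠ 0) :
    0 ≤ ((2 * JSD μ pE (fun x => ω * pθ x + (1 - ω) * pα x) : ℝ) : EReal)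
        + ((lamE : ℝ) : EReal) * ((KLD μ pE pα : ℝ≥0∞) : EReal)
        + ((lamG : ℝ) : EReal) * ((KLD μ pθ pα : ℝ≥0∞) : EReal) ∧
    (((2 * JSD μ pE (fun x => ω * pθ x + (1 - ω) * pα x) : ℝ) : EReal)
        + ((lamE : ℝ) : EReal) * ((KLD μ pE pα : ℝ≥0∞) : EReal)
        + ((lamG : ℝ) : EReal) * ((KLD μ pθ pα : ℝ≥0∞) : EReal) = 0
      ↔ (pθ =ᵐ[μ] pE ∧ pα =ᵐ[μ] pE)) := by
  have hωi : Integrable (fun x ↦ ω * pθ x + (1 - ω) * pα x) μ :=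
    (hpθi.const_mul ω).add (hpαi.const_mul (1 - ω))
  have hω0 := ae_nonneg_mixture (Set.Ioc_subset_Icc_self hω) hpθ0 hpα0
  have hJSD := mul_nonneg zero_le_two (JSD_nonneg hpEi hpE0 hωi hω0)
  refine ⟨coe_add_mul_add_mul_nonneg hJSD hlamE hlamG, ?_⟩
  rw [coe_add_mul_add_mul_eq_zero_iff hJSD hlamE hlamG, mul_eq_zero_iff_left two_ne_zero,
    JSD_eq_zero_iff hpEi hpE0 hωi hω0,
    KLD_eq_zero_iff hpEi.aemeasurable hpE0 hpαi.aemeasurable hpα0,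
    KLD_eq_zero_iff hpθi.aemeasurable hpθ0 hpαi.aemeasurable hpα0]
  constructor
  · rintro ⟨⟨hE_mix, hE⟩, hG⟩
    rcases hlam with hlamE_ne | hlamG_ne
    · have hEα := hE.resolve_left hlamE_ne
      exact ⟨(ae_eq_mixture_iff hω.1.ne' hEα).1 hE_mix, hEα.symm⟩
    · have hθα := hG.resolve_left hlamG_ne
      have hθE := (ae_eq_of_ae_eq_mixture hE_mix hθα).symm
      exact ⟨hθE, hθα.symm.trans hθE⟩
  · rintro ⟨hθE, hαE⟩
    exact ⟨⟨(ae_eq_mixture_iff hω.1.ne' hαE.symm).2 hθE, .inr hαE.symm⟩, .inr (hθE.trans hαE.symm)⟩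

theorem regularized_equilibrium_RE_RG
    {X : Type*} [MeasurableSpace X] (μ : Measure X) [SigmaFinite μ]
    (pE pθ pα : X → ℝ)
    (hpEm : Measurable pE) (hpE0 : ∀ x, 0 ≤ pE x) (hpE1 : ∫ x, pE x ∂μ = 1)
    (hpθm : Measurable pθ) (hpθ0 : ∀ x, 0 ≤ pθ x) (hpθ1 : ∫ x, pθ x ∂μ = 1)
    (hpαm : Measurable pα) (hpα0 : ∀ x, 0 ≤ pα x) (hpα1 : ∫ x, pα x ∂μ = 1)
    (ω : ℝ) (hω : ω ∈ Set.Ioo (0 : ℝ) 1)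
    (lamE : ℝ) (hlamE : 0 < lamE) (lamG : ℝ) (hlamG : 0 ≤ lamG) :
    0 ≤ ((2 * JSD μ pE (fun x => ω * pθ x + (1 - ω) * pα x) : ℝ) : EReal)
        + ((lamE : ℝ) : EReal) * ((KLD μ pE pα : ℝ≥0∞) : EReal)
        + ((lamG : ℝ) : EReal) * ((KLD μ pθ pα : ℝ≥0∞) : EReal) ∧
    (((2 * JSD μ pE (fun x => ω * pθ x + (1 - ω) * pα x) : ℝ) : EReal)
        + ((lamE : ℝ) : EReal) * ((KLD μ pE pα : ℝ≥0∞) : EReal)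
        + ((lamG : ℝ) : EReal) * ((KLD μ pθ pα : ℝ≥0∞) : EReal) = 0
      ↔ (pθ =ᵐ[μ] pE ∧ pα =ᵐ[μ] pE)) :=
  regularized_equilibrium_RE_RG_general (integrable_of_integral_eq_one hpE1) (.of_forall hpE0)
    (integrable_of_integral_eq_one hpθ1) (.of_forall hpθ0)
    (integrable_of_integral_eq_one hpα1) (.of_forall hpα0)
    (Set.Ioo_subset_Ioc_self hω) hlamE.le hlamG (.inl hlamE.ne')

end
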